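/- Let a ∈ [0,1]. There exists a constant c > 0, depending only on a, such that for all ξ₁, ξ₂ ∈ ℝ with |ξ₁|/4 ≤ |ξ₂| ≤ |ξ₁|: if ξ₁ξ₂ ≥ 0 then |ω(ξ₁) + ω(ξ₂) − ω(ξ₁+ξ₂)| ≥ c |ξ₁|^{2+a}, and if ξ₁ξ₂ ≤ 0 then |ω(ξ₁) + ω(ξ₂) − ω(ξ₁+ξ₂)| ≥ c |ξ₁|^{1+a} |ξ₁+ξ₂|. -/

import Mathlib

/-!
For `u, v` of the same sign, with sum `s` and `q = 1 + a`, the resonance function satisfies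
`|Ω(u, v)| = |u| (|s|^q - |u|^q) + |v| (|s|^q - |v|^q)`. Both terms are nonnegative, and the
second one is at least `(1 - θ^q) |v| |s|^q` as soon as `|v| ≤ θ |s|`. When `ξ₁, ξ₂` have the same
sign this applies to the pair `(ξ₁, ξ₂)` with `θ = 1/2`. When the signs differ, oddness of `ω` gives
`Ω(ξ₁, ξ₂) = -Ω(-ξ₂, ξ₁ + ξ₂)`, and `-ξ₂` and `ξ₁ + ξ₂` have the same sign; here `θ < 1` because
`|ξ₂|` is bounded below by a multiple of `|ξ₁|`.
-/

open MeasureTheory Complex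

noncomputable section

/-- The dispersive symbol `ω(ξ) = ξ |ξ|^(1+a)`. -/
def disp (a ξ : ℝ) : ℝ := ξ * |ξ| ^ (1 + a)

/-- Fourier transform on `ℝ`, convention `f̂(ξ) = ∫ e^{ixξ} f(x) dx`. -/
def FT1 (f : ℝ → ℂ) (ξ : ℝ) : ℂ :=
  ∫ x : ℝ, Complex.exp (Complex.I * ((x * ξ : ℝ) : ℂ)) * f x

/-- Spacetime Fourier transform, convention `f̂(ξ,λ) = ∫ e^{i(xξ+tλ)} f(x,t) dx dt`,
for `f : ℝ × ℝ → ℂ` with first coordinate `x` (space) and second `t` (time). -/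
def FT2 (f : ℝ × ℝ → ℂ) (ξ lam : ℝ) : ℂ :=
  ∫ p : ℝ × ℝ, Complex.exp (Complex.I * ((p.1 * ξ + p.2 * lam : ℝ) : ℂ)) * f p

/-- The dyadic cutoffs `χ_j`: `χ_0 = χ₀` and `χ_j(z) = χ(2^{-j} z)` for `j ≥ 1`. -/
def chiJ (χ₀ χ : ℝ → ℝ) (j : ℕ) (z : ℝ) : ℝ :=
  if j = 0 then χ₀ z else χ ((2 : ℝ) ^ (-(j : ℝ)) * z)

/-- Hypotheses on the fixed dyadic cutoffs. -/
structure DyadicCutoffs (χ₀ χ : ℝ → ℝ) : Prop where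
  smooth0 : ContDiff ℝ (⊤ : ℕ∞) χ₀
  even0 : ∀ z, χ₀ (-z) = χ₀ z
  mem0 : ∀ z, χ₀ z ∈ Set.Icc (0 : ℝ) 1
  supp0 : ∀ z, 2 < |z| → χ₀ z = 0
  one0 : ∀ z, |z| ≤ 1 → χ₀ z = 1
  smooth1 : ContDiff ℝ (⊤ : ℕ∞) χ
  even1 : ∀ z, χ (-z) = χ z
  mem1 : ∀ z, χ z ∈ Set.Icc (0 : ℝ) 1
  supp1 : ∀ z, χ z ≠ 0 → 1 / 2 < |z| ∧ |z| < 2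
  partition : ∀ z, ∑' j : ℕ, chiJ χ₀ χ j z = 1

/-- A smooth time cutoff supported in `[-1,1]`. -/
structure TimeCutoff (ψ : ℝ → ℝ) : Prop where
  smooth : ContDiff ℝ (⊤ : ℕ∞) ψ
  supp : ∀ t, ψ t ≠ 0 → |t| ≤ 1

/-- The norm `‖f‖_{X^b_s}`. -/
def Xnorm (a : ℝ) (χ₀ χ : ℝ → ℝ) (b s : ℝ) (f : ℝ × ℝ → ℂ) : ℝ :=
  ∑' j : ℕ, (2 : ℝ) ^ ((j : ℝ) * b) *
    (∫ p : ℝ × ℝ, chiJ χ₀ χ j (p.2 - disp a p.1) * (1 + |p.1|) ^ (2 * s) *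
      ‖FT2 f p.1 p.2‖ ^ 2) ^ ((1 : ℝ) / 2)

/-- The norm `‖f‖_{Y^b_{s₀,s₁}} = ‖x·f‖_{X^b_{s₀}} + ‖t·f‖_{X^b_{s₁}}`. -/
def Ynorm (a : ℝ) (χ₀ χ : ℝ → ℝ) (b s₀ s₁ : ℝ) (f : ℝ × ℝ → ℂ) : ℝ :=
  Xnorm a χ₀ χ b s₀ (fun p => (p.1 : ℂ) * f p) +
    Xnorm a χ₀ χ b s₁ (fun p => (p.2 : ℂ) * f p)

/-- The norm `‖f‖_{Z^b_s} = ‖f‖_{X^b_s} + ‖f‖_{Y^b_{s-2s*,s}}`, where `s* = 1/2 + a/2`. -/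
def Znorm (a : ℝ) (χ₀ χ : ℝ → ℝ) (b s : ℝ) (f : ℝ × ℝ → ℂ) : ℝ :=
  Xnorm a χ₀ χ b s f + Ynorm a χ₀ χ b (s - 2 * (1 / 2 + a / 2)) s f

/-- The norm `‖f‖_{X̃^b_s}`. -/
def XtildeNorm (a b s : ℝ) (f : ℝ × ℝ → ℂ) : ℝ :=
  (∫ p : ℝ × ℝ, (1 + |p.2 - disp a p.1|) ^ (2 * b) * (1 + |p.1|) ^ (2 * s) *
    ‖FT2 f p.1 p.2‖ ^ 2) ^ ((1 : ℝ) / 2)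

/-- The Sobolev norm `‖g‖_{H^s} = (∫ (1+|ξ|)^{2s} |ĝ(ξ)|² dξ)^{1/2}`. -/
def Hnorm (s : ℝ) (g : ℝ → ℂ) : ℝ :=
  (∫ ξ : ℝ, (1 + |ξ|) ^ (2 * s) * ‖FT1 g ξ‖ ^ 2) ^ ((1 : ℝ) / 2)

/-- The weighted norm `‖g‖_{F^s} = ‖g‖_{H^s} + ‖x·g‖_{H^{s-2s*}}` (here `sstar = s*`). -/
def Fnorm (sstar s : ℝ) (g : ℝ → ℂ) : ℝ :=
  Hnorm s g + Hnorm (s - 2 * sstar) (fun x => (x : ℂ) * g x)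

/-- The `L^p` norm `(∫ ‖f‖^p)^{1/p}`. -/
def Lpnorm {α : Type*} [MeasureSpace α] {E : Type*} [NormedAddCommGroup E]
    (p : ℝ) (f : α → E) : ℝ :=
  (∫ x, ‖f x‖ ^ p) ^ (1 / p)

/-- The linear propagator `W(t)`, defined via Fourier inversion so that its Fourier
transform in `x` is `e^{itω(ξ)} û₀(ξ)`. -/
def Wgrp (a : ℝ) (u₀ : ℝ → ℂ) (t x : ℝ) : ℂ :=
  ((1 / (2 * Real.pi) : ℝ) : ℂ) *
    ∫ ξ : ℝ, Complex.exp (-(Complex.I * ((x * ξ : ℝ) : ℂ))) *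
      (Complex.exp (Complex.I * ((t * disp a ξ : ℝ) : ℂ)) * FT1 u₀ ξ)

/-- The Fourier multiplier `D^σ` with symbol `|ξ|^σ`, via Fourier inversion. -/
def Dop (σ : ℝ) (g : ℝ → ℂ) (x : ℝ) : ℂ :=
  ((1 / (2 * Real.pi) : ℝ) : ℂ) *
    ∫ ξ : ℝ, Complex.exp (-(Complex.I * ((x * ξ : ℝ) : ℂ))) *
      (((|ξ| ^ σ : ℝ) : ℂ) * FT1 g ξ)

lemma abs_add_of_mul_nonneg {R : Type*} [Ring R] [LinearOrder R] [IsStrictOrderedRing R] {x y : R}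
    (h : 0 ≤ x * y) : |x + y| = |x| + |y| :=
  (abs_add_eq_add_abs_iff x y).mpr (mul_nonneg_iff.mp h)

/-- The resonance function `Ω(ξ₁, ξ₂) = ω(ξ₁) + ω(ξ₂) - ω(ξ₁ + ξ₂)`: how far, in time frequency, the
product of two waves on the dispersion curve `λ = ω(ξ)` lies from that curve. -/
def resonance (a ξ₁ ξ₂ : ℝ) : ℝ := disp a ξ₁ + disp a ξ₂ - disp a (ξ₁ + ξ₂)

lemma disp_neg (a ξ : ℝ) : disp a (-ξ) = -disp a ξ := by
  rw [disp, disp, abs_neg, neg_mul]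

section Resonance

variable {a θ ξ₁ ξ₂ : ℝ}

lemma resonance_neg_neg (a ξ₁ ξ₂ : ℝ) : resonance a (-ξ₁) (-ξ₂) = -resonance a ξ₁ ξ₂ := by
  simp only [resonance, ← neg_add, disp_neg]
  ring

lemma resonance_neg_right_add (a ξ₁ ξ₂ : ℝ) :
    resonance a (-ξ₂) (ξ₁ + ξ₂) = -resonance a ξ₁ ξ₂ := by
  rw [resonance, resonance, neg_add_cancel_comm_assoc, disp_neg]
  ring

lemma abs_resonance_abs_abs (h : 0 ≤ ξ₁ * ξ₂) :
    |resonance a (|ξ₁|) (|ξ₂|)| = |resonance a ξ₁ ξ₂| := by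
  rcases mul_nonneg_iff.mp h with ⟨h₁, h₂⟩ | ⟨h₁, h₂⟩
  · rw [abs_of_nonneg h₁, abs_of_nonneg h₂]
  · rw [abs_of_nonpos h₁, abs_of_nonpos h₂, resonance_neg_neg, abs_neg]

lemma mul_rpow_le_neg_resonance (ha : -1 ≤ a) (hθ : 0 ≤ θ) (h₁ : 0 ≤ ξ₁) (h₂ : 0 ≤ ξ₂)
    (h : ξ₂ ≤ θ * (ξ₁ + ξ₂)) :
    (1 - θ ^ (1 + a)) * ξ₂ * (ξ₁ + ξ₂) ^ (1 + a) ≤ -resonance a ξ₁ ξ₂ := by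
  have hs : 0 ≤ ξ₁ + ξ₂ := add_nonneg h₁ h₂
  have hq : 0 ≤ 1 + a := by linarith
  have hpow₁ : ξ₁ ^ (1 + a) ≤ (ξ₁ + ξ₂) ^ (1 + a) :=
    Real.rpow_le_rpow h₁ (le_add_of_nonneg_right h₂) hq
  have hpow₂ : ξ₂ ^ (1 + a) ≤ θ ^ (1 + a) * (ξ₁ + ξ₂) ^ (1 + a) :=
    (Real.rpow_le_rpow h₂ h hq).trans_eq (Real.mul_rpow hθ hs)
  calc (1 - θ ^ (1 + a)) * ξ₂ * (ξ₁ + ξ₂) ^ (1 + a)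
      = ξ₁ * 0 + ξ₂ * ((ξ₁ + ξ₂) ^ (1 + a) - θ ^ (1 + a) * (ξ₁ + ξ₂) ^ (1 + a)) := by ring
    _ ≤ ξ₁ * ((ξ₁ + ξ₂) ^ (1 + a) - ξ₁ ^ (1 + a)) +
          ξ₂ * ((ξ₁ + ξ₂) ^ (1 + a) - ξ₂ ^ (1 + a)) := by
        gcongr
        exact sub_nonneg.mpr hpow₁
    _ = -resonance a ξ₁ ξ₂ := by
        simp only [resonance, disp, abs_of_nonneg h₁, abs_of_nonneg h₂, abs_of_nonneg hs]
        ring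

lemma mul_rpow_le_abs_resonance (ha : -1 ≤ a) (hθ : 0 ≤ θ) (hsign : 0 ≤ ξ₁ * ξ₂)
    (h : |ξ₂| ≤ θ * |ξ₁ + ξ₂|) :
    (1 - θ ^ (1 + a)) * |ξ₂| * |ξ₁ + ξ₂| ^ (1 + a) ≤ |resonance a ξ₁ ξ₂| := by
  have habs : |ξ₁ + ξ₂| = |ξ₁| + |ξ₂| := abs_add_of_mul_nonneg hsign
  rw [habs] at h ⊢
  rw [← abs_resonance_abs_abs hsign]
  exact (mul_rpow_le_neg_resonance ha hθ (abs_nonneg ξ₁) (abs_nonneg ξ₂) h).trans (neg_le_abs _)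

lemma mul_rpow_le_abs_resonance_of_mul_nonneg (ha : -1 ≤ a) (hsign : 0 ≤ ξ₁ * ξ₂)
    (h : |ξ₂| ≤ |ξ₁|) :
    (1 - (1 / 2) ^ (1 + a)) * |ξ₂| * |ξ₁| ^ (1 + a) ≤ |resonance a ξ₁ ξ₂| := by
  have hq : 0 ≤ 1 + a := by linarith
  have habs : |ξ₁ + ξ₂| = |ξ₁| + |ξ₂| := abs_add_of_mul_nonneg hsign
  have hle : |ξ₁| ≤ |ξ₁ + ξ₂| := habs ▸ le_add_of_nonneg_right (abs_nonneg ξ₂)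
  have hconst : 0 ≤ 1 - (1 / 2 : ℝ) ^ (1 + a) :=
    sub_nonneg.mpr (Real.rpow_le_one (by norm_num) (by norm_num) hq)
  calc (1 - (1 / 2) ^ (1 + a)) * |ξ₂| * |ξ₁| ^ (1 + a)
      ≤ (1 - (1 / 2) ^ (1 + a)) * |ξ₂| * |ξ₁ + ξ₂| ^ (1 + a) := by
        exact mul_le_mul_of_nonneg_left (Real.rpow_le_rpow (abs_nonneg ξ₁) hle hq)
          (mul_nonneg hconst (abs_nonneg ξ₂))
    _ ≤ |resonance a ξ₁ ξ₂| :=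
        mul_rpow_le_abs_resonance ha (by norm_num) hsign (by linarith)

lemma mul_rpow_le_abs_resonance_of_mul_nonpos (ha : -1 ≤ a) (hθ : 0 ≤ θ) (hsign : ξ₁ * ξ₂ ≤ 0)
    (hlower : (1 - θ) * |ξ₁| ≤ |ξ₂|) (hupper : |ξ₂| ≤ |ξ₁|) :
    (1 - θ ^ (1 + a)) * |ξ₁ + ξ₂| * |ξ₁| ^ (1 + a) ≤ |resonance a ξ₁ ξ₂| := by
  have hsign' : 0 ≤ -ξ₂ * (ξ₁ + ξ₂) := by
    have hmul : |ξ₂| * |ξ₂| ≤ |ξ₁| * |ξ₂| := mul_le_mul_of_nonneg_right hupper (abs_nonneg ξ₂)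
    rw [abs_mul_abs_self, ← abs_mul, abs_of_nonpos hsign] at hmul
    linarith
  have hsum : -ξ₂ + (ξ₁ + ξ₂) = ξ₁ := neg_add_cancel_comm_assoc ξ₂ ξ₁
  have habs : |ξ₁| = |ξ₂| + |ξ₁ + ξ₂| := by
    have hadd := abs_add_of_mul_nonneg hsign'
    rwa [hsum, abs_neg] at hadd
  have hsmall : |ξ₁ + ξ₂| ≤ θ * |-ξ₂ + (ξ₁ + ξ₂)| := by
    rw [hsum]
    linarith
  simpa only [hsum, resonance_neg_right_add, abs_neg] using
    mul_rpow_le_abs_resonance ha hθ hsign' hsmall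

end Resonance

theorem statement10_general {a ρ : ℝ} (ha : -1 < a) (hρ : 0 < ρ) :
    ∃ c > 0, ∀ ξ₁ ξ₂ : ℝ, ρ * |ξ₁| ≤ |ξ₂| → |ξ₂| ≤ |ξ₁| →
      (0 ≤ ξ₁ * ξ₂ → c * |ξ₁| ^ (2 + a) ≤ |resonance a ξ₁ ξ₂|) ∧
      (ξ₁ * ξ₂ ≤ 0 → c * |ξ₁| ^ (1 + a) * |ξ₁ + ξ₂| ≤ |resonance a ξ₁ ξ₂|) := by
  have hq : 0 < 1 + a := by linarith
  set θ : ℝ := max 0 (1 - ρ)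
  have hθ : 0 ≤ θ := le_max_left _ _
  have hθ_lt : θ < 1 := max_lt one_pos (by linarith)
  have hhalf : 0 < 1 - (1 / 2 : ℝ) ^ (1 + a) :=
    sub_pos.mpr (Real.rpow_lt_one (by norm_num) (by norm_num) hq)
  have hθ_pow : 0 < 1 - θ ^ (1 + a) := sub_pos.mpr (Real.rpow_lt_one hθ hθ_lt hq)
  refine ⟨min ((1 - (1 / 2) ^ (1 + a)) * ρ) (1 - θ ^ (1 + a)), lt_min (mul_pos hhalf hρ) hθ_pow,
    fun ξ₁ ξ₂ hlower hupper => ⟨fun hsign => ?_, fun hsign => ?_⟩⟩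
  · calc min ((1 - (1 / 2) ^ (1 + a)) * ρ) (1 - θ ^ (1 + a)) * |ξ₁| ^ (2 + a)
        ≤ (1 - (1 / 2) ^ (1 + a)) * ρ * |ξ₁| ^ (2 + a) := by gcongr; exact min_le_left _ _
      _ = (1 - (1 / 2) ^ (1 + a)) * (ρ * |ξ₁|) * |ξ₁| ^ (1 + a) := by
          rw [show 2 + a = 1 + (1 + a) by ring,
            Real.rpow_one_add' (abs_nonneg ξ₁) (by linarith)]
          ring
      _ ≤ (1 - (1 / 2) ^ (1 + a)) * |ξ₂| * |ξ₁| ^ (1 + a) := by gcongr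
      _ ≤ |resonance a ξ₁ ξ₂| := mul_rpow_le_abs_resonance_of_mul_nonneg ha.le hsign hupper
  · have hlower' : (1 - θ) * |ξ₁| ≤ |ξ₂| := by
      refine le_trans ?_ hlower
      gcongr
      exact sub_le_comm.mp (le_max_right _ _)
    calc min ((1 - (1 / 2) ^ (1 + a)) * ρ) (1 - θ ^ (1 + a)) * |ξ₁| ^ (1 + a) * |ξ₁ + ξ₂|
        ≤ (1 - θ ^ (1 + a)) * |ξ₁| ^ (1 + a) * |ξ₁ + ξ₂| := by gcongr; exact min_le_right _ _
      _ = (1 - θ ^ (1 + a)) * |ξ₁ + ξ₂| * |ξ₁| ^ (1 + a) := mul_right_comm _ _ _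
      _ ≤ |resonance a ξ₁ ξ₂| :=
          mul_rpow_le_abs_resonance_of_mul_nonpos ha.le hθ hsign hlower' hupper

theorem statement10 (a : ℝ) (ha : a ∈ Set.Icc (0 : ℝ) 1) :
    ∃ c > 0, ∀ ξ₁ ξ₂ : ℝ, |ξ₁| / 4 ≤ |ξ₂| → |ξ₂| ≤ |ξ₁| →
      (ξ₁ * ξ₂ ≥ 0 →
        |disp a ξ₁ + disp a ξ₂ - disp a (ξ₁ + ξ₂)| ≥ c * |ξ₁| ^ (2 + a)) ∧
      (ξ₁ * ξ₂ ≤ 0 →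
        |disp a ξ₁ + disp a ξ₂ - disp a (ξ₁ + ξ₂)| ≥ c * |ξ₁| ^ (1 + a) * |ξ₁ + ξ₂|) := by
  simpa only [resonance, ge_iff_le, div_eq_inv_mul] using
    statement10_general (neg_one_lt_zero.trans_le ha.1) (inv_pos.mpr (zero_lt_four (α := ℝ)))
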